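/- Let 1 ≤ p < ∞ and let X be a Banach space. There is a constant C > 0 depending only on p such that the following holds: if f = Σ_J x_J h_J is a finitely supported X-valued Haar expansion whose Haar support is partitioned into blocks {B(I) : I ∈ E} with Carleson constant ⟦E⟧ ≤ 4, then ‖f‖_{H^p_X}^p ≤ C · Σ_{I∈E} ‖f_I‖_{H^p_X}^p, where f_I = Σ_{J ∈ B(I)} x_J h_J. -/

import Mathlib

open MeasureTheory Set
open scoped ENNReal NNReal Classical

noncomputable section

/-- A dyadic subinterval of `[0,1)`: the half-open interval
`[k/2^n, (k+1)/2^n)` with `k < 2^n`. -/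
structure DyadicI where
  n : ℕ
  k : ℕ
  hk : k < 2 ^ n

instance : Nonempty DyadicI := ⟨⟨0, 0, by norm_num⟩⟩

namespace DyadicI

/-- The length `|I| = 2^{-n}` of a dyadic interval. -/
def len (I : DyadicI) : ℝ := (2 : ℝ) ^ (-(I.n : ℤ))

/-- The left endpoint `k 2^{-n}` of a dyadic interval. -/
def lep (I : DyadicI) : ℝ := (I.k : ℝ) * I.len

/-- The underlying point set `[k/2^n, (k+1)/2^n)` of a dyadic interval. -/
def toSet (I : DyadicI) : Set ℝ := Set.Ico I.lep (I.lep + I.len)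

/-- The `L^∞`-normalized Haar function `h_I`: `1` on the left half of `I`,
`-1` on the right half of `I`, `0` off `I`. -/
def haar (I : DyadicI) (t : ℝ) : ℝ :=
  if t ∈ Set.Ico I.lep (I.lep + I.len / 2) then 1
  else if t ∈ Set.Ico (I.lep + I.len / 2) (I.lep + I.len) then -1
  else 0

end DyadicI

open DyadicI

section Defs

variable {X : Type*} [NormedAddCommGroup X] [NormedSpace ℝ X]

/-- The square function `𝕊(f)` of the `X`-valued Haar expansion `f = ∑_{I ∈ s} x_I h_I`:
`𝕊(f)(t) = (E_ε ‖∑_I ε_I x_I h_I(t)‖²)^{1/2}`, the average being taken over all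
choices of signs `ε_I ∈ {±1}`, `I ∈ s`. -/
def sqFn (s : Finset DyadicI) (x : DyadicI → X) (t : ℝ) : ℝ :=
  Real.sqrt ((∑ ε : {I // I ∈ s} → Bool,
    ‖∑ I ∈ s.attach, ((if ε I then (1 : ℝ) else -1) * haar I.1 t) • x I.1‖ ^ 2) /
      2 ^ s.card)

/-- The `H^p_X` (quasi-)norm of `f = ∑_{I ∈ s} x_I h_I`:
`‖f‖ = (∫₀¹ 𝕊(f)(t)^p dt)^{1/p}`. -/
def HpNormV (p : ℝ) (s : Finset DyadicI) (x : DyadicI → X) : ℝ :=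
  (∫ t in Set.Icc (0 : ℝ) 1, sqFn s x t ^ p) ^ (1 / p)

/-- The coefficients of `(T_{τ,p} ⊗ Id_X)(f)` for `f = ∑_{I ∈ s} x_I h_I`, namely
`(T_{τ,p} ⊗ Id_X)(f) = ∑_{I ∈ s} (|I|/|τ(I)|)^{1/p} x_I h_{τ(I)}`, as a family of
coefficients indexed by the Haar support `τ(s)`. -/
def rearrCoef (τ : DyadicI → DyadicI) (p : ℝ) (s : Finset DyadicI) (x : DyadicI → X) :
    DyadicI → X :=
  fun J => ∑ I ∈ s, if τ I = J then ((len I / len (τ I)) ^ (1 / p)) • x I else 0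

/-- The scalar dyadic square function `S(f) = (∑_I a_I² 1_I)^{1/2}`
of `f = ∑_{I ∈ s} a_I h_I`. -/
def sqFnS (s : Finset DyadicI) (a : DyadicI → ℝ) (t : ℝ) : ℝ :=
  Real.sqrt (∑ I ∈ s, a I ^ 2 * Set.indicator (toSet I) (fun _ => (1 : ℝ)) t)

/-- The scalar dyadic `H^p` (quasi-)norm `‖f‖_{H^p} = ‖S(f)‖_{L^p[0,1]}`. -/
def HpNormS (p : ℝ) (s : Finset DyadicI) (a : DyadicI → ℝ) : ℝ :=
  (∫ t in Set.Icc (0 : ℝ) 1, sqFnS s a t ^ p) ^ (1 / p)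

/-- The coefficients of the scalar rearrangement operator `T_{τ,p}` applied to
`f = ∑_{I ∈ s} a_I h_I`; `T_{τ,p}` is determined by
`T_{τ,p}(h_I/|I|^{1/p}) = h_{τ(I)}/|τ(I)|^{1/p}`. -/
def rearrCoefS (τ : DyadicI → DyadicI) (p : ℝ) (s : Finset DyadicI) (a : DyadicI → ℝ) :
    DyadicI → ℝ :=
  fun J => ∑ I ∈ s, if τ I = J then ((len I / len (τ I)) ^ (1 / p)) * a I else 0

/-- The operator norm `‖T_{τ,p} ⊗ Id_X : H^p_X → H^p_X‖ ∈ [0,∞]`, computed as the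
supremum over finitely supported `f` in the unit ball of `H^p_X`. -/
def hpOpNorm (τ : DyadicI → DyadicI) (p : ℝ) (X : Type*) [NormedAddCommGroup X]
    [NormedSpace ℝ X] : ℝ≥0∞ :=
  ⨆ (s : Finset DyadicI) (x : DyadicI → X) (_ : HpNormV p s x ≤ 1),
    ENNReal.ofReal (HpNormV p (s.image τ) (rearrCoef τ p s x))

/-- The scalar operator norm `‖T_{τ,p} : H^p → H^p‖ ∈ [0,∞]`. -/
def hpOpNormS (τ : DyadicI → DyadicI) (p : ℝ) : ℝ≥0∞ :=
  ⨆ (s : Finset DyadicI) (a : DyadicI → ℝ) (_ : HpNormS p s a ≤ 1),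
    ENNReal.ofReal (HpNormS p (s.image τ) (rearrCoefS τ p s a))

/-- For `H = τ(L)` (so that `σ(J) = I` for `J = τ(I)`, `I ∈ L`), the maximal function
`μ_H(t) = sup_{J ∈ H} (|σ(J)|/|J|) 1_J(t) = sup_{I ∈ L} (|I|/|τ(I)|) 1_{τ(I)}(t)`,
as an `[0,∞]`-valued function. -/
def muSet (τ : DyadicI → DyadicI) (L : Set DyadicI) (t : ℝ) : ℝ≥0∞ :=
  ⨆ (I : DyadicI) (_ : I ∈ L),
    ENNReal.ofReal (len I / len (τ I) * Set.indicator (toSet (τ I)) (fun _ => (1 : ℝ)) t)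

/-- For `H = τ(L)` with `L` finite, the (real-valued) maximal function
`μ_H(t) = max_{I ∈ L} (|I|/|τ(I)|) 1_{τ(I)}(t)`. -/
def muFin (τ : DyadicI → DyadicI) (L : Finset DyadicI) (t : ℝ) : ℝ :=
  ((L.sup fun I =>
    Real.toNNReal (len I / len (τ I) * Set.indicator (toSet (τ I)) (fun _ => (1 : ℝ)) t) : ℝ≥0) : ℝ)

/-- The point set `L* = ⋃_{I ∈ L} I` covered by a collection of dyadic intervals. -/
def pointSet (L : Set DyadicI) : Set ℝ := ⋃ I ∈ L, toSet I

/-- The constant `C₁ = sup_{H ⊆ τ(D), H ≠ ∅} (1/|σ(H)*|) ∫₀¹ μ_H(t) dt`, where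
nonempty collections `H ⊆ τ(D)` are parametrized as `H = τ(L)` for nonempty `L ⊆ D`,
so that `σ(H)* = L*`. -/
def Cone (τ : DyadicI → DyadicI) : ℝ≥0∞ :=
  ⨆ (L : Set DyadicI) (_ : L.Nonempty),
    (∫⁻ t in Set.Icc (0 : ℝ) 1, muSet τ L t) / volume (pointSet L)

/-- The square of the dyadic BMO norm of `g = ∑_{J ∈ s} a_J h_J`:
`‖g‖_{BMO}² = sup_{I ∈ D} (1/|I|) ∑_{J ⊆ I} a_J² |J|`. -/
def bmoSq (s : Finset DyadicI) (a : DyadicI → ℝ) : ℝ≥0∞ :=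
  ⨆ I : DyadicI, ENNReal.ofReal
    ((∑ J ∈ s.filter fun J => toSet J ⊆ toSet I, a J ^ 2 * len J) / len I)

/-- The coefficients of `S_σ(g)` for `g = ∑_{J ∈ s} a_J h_J`, where `σ = τ⁻¹` on `τ(D)`:
`S_σ(h_J) = h_{σ(J)}` for `J ∈ τ(D)` and `S_σ(h_J) = 0` otherwise, so that the
coefficient of `h_K` in `S_σ(g)` is `a_{τ(K)}` if `τ(K) ∈ s`, and `0` otherwise. -/
def sSigmaCoef (τ : DyadicI → DyadicI) (s : Finset DyadicI) (a : DyadicI → ℝ) :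
    DyadicI → ℝ :=
  fun K => if τ K ∈ s then a (τ K) else 0

/-- The Haar support of `S_σ(g)` for `g` with Haar support `s`:
`σ(s ∩ τ(D))`, i.e. the preimage under `τ` of `s`. -/
def sSigmaSupp (τ : DyadicI → DyadicI) (s : Finset DyadicI) : Finset DyadicI :=
  (s.filter fun J => J ∈ Set.range τ).image (Function.invFun τ)

/-- The operator norm `‖S_σ‖_{BMO} ∈ [0,∞]` of `S_σ` with respect to the dyadic BMO
norm, computed over finitely supported Haar expansions. -/
def bmoOpNorm (τ : DyadicI → DyadicI) : ℝ≥0∞ :=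
  ⨆ (s : Finset DyadicI) (a : DyadicI → ℝ) (_ : bmoSq s a ≤ 1),
    (bmoSq (sSigmaSupp τ s) (sSigmaCoef τ s a)) ^ (1 / 2 : ℝ)

/-- The Carleson constant `⟦C⟧ = sup_{I ∈ C} (1/|I|) ∑_{J ∈ C, J ⊆ I} |J| ∈ [0,∞]`
of a collection of dyadic intervals. -/
def carleson (C : Set DyadicI) : ℝ≥0∞ :=
  ⨆ (I : DyadicI) (_ : I ∈ C),
    (∑' J : {J : DyadicI // J ∈ C ∧ toSet J ⊆ toSet I}, ENNReal.ofReal (len J.1)) /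
      ENNReal.ofReal (len I)

/-- The `L^p_X = L^p([0,1]; X)` (Bochner) norm of `f = ∑_{I ∈ s} x_I h_I`. -/
def LpNormV (p : ℝ) (s : Finset DyadicI) (x : DyadicI → X) : ℝ :=
  (∫ t in Set.Icc (0 : ℝ) 1, ‖∑ I ∈ s, haar I t • x I‖ ^ p) ^ (1 / p)

/-- The operator norm `‖T_{τ,p} ⊗ Id_X : L^p_X → L^p_X‖ ∈ [0,∞]`, computed over
finitely supported Haar expansions. -/
def lpOpNorm (τ : DyadicI → DyadicI) (p : ℝ) (X : Type*) [NormedAddCommGroup X]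
    [NormedSpace ℝ X] : ℝ≥0∞ :=
  ⨆ (s : Finset DyadicI) (x : DyadicI → X) (_ : LpNormV p s x ≤ 1),
    ENNReal.ofReal (LpNormV p (s.image τ) (rearrCoef τ p s x))

/-- The operator norm `‖T_{τ,p}^{-1} ⊗ Id_X‖ ∈ [0,∞]` on the span of
`{h_J : J ∈ τ(D)}` with the `L^p_X` norm: the map determined by
`x h_{τ(I)}/|τ(I)|^{1/p} ↦ x h_I/|I|^{1/p}`, i.e. sending
`g = ∑_{I ∈ L} x_I h_{τ(I)}` to `∑_{I ∈ L} (|τ(I)|/|I|)^{1/p} x_I h_I`. -/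
def lpInvOpNorm (τ : DyadicI → DyadicI) (p : ℝ) (X : Type*) [NormedAddCommGroup X]
    [NormedSpace ℝ X] : ℝ≥0∞ :=
  ⨆ (L : Finset DyadicI) (x : DyadicI → X)
    (_ : LpNormV p (L.image τ) (fun J => ∑ I ∈ L, if τ I = J then x I else 0) ≤ 1),
    ENNReal.ofReal (LpNormV p L fun I => ((len (τ I) / len I) ^ (1 / p)) • x I)

/-- The operator norm `‖T_{τ,1}^{-1}‖₁ ∈ [0,∞]` on the span of `{h_J : J ∈ τ(D)}`
with the dyadic `H¹` norm: the map determined by `h_{τ(I)}/|τ(I)| ↦ h_I/|I|`,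
i.e. sending `g = ∑_{I ∈ L} a_I h_{τ(I)}` to `∑_{I ∈ L} (|τ(I)|/|I|) a_I h_I`. -/
def h1InvOpNorm (τ : DyadicI → DyadicI) : ℝ≥0∞ :=
  ⨆ (L : Finset DyadicI) (a : DyadicI → ℝ)
    (_ : HpNormS 1 (L.image τ) (fun J => ∑ I ∈ L, if τ I = J then a I else 0) ≤ 1),
    ENNReal.ofReal (HpNormS 1 L fun I => (len (τ I) / len I) * a I)

/-- The Rademacher average `(E_ε ‖∑_{i<n} ε_i a_i‖^p)^{1/p}` over all choices of
signs `ε_i ∈ {±1}`. -/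
def radAvg (p : ℝ) {Y : Type*} [NormedAddCommGroup Y] [NormedSpace ℝ Y] (n : ℕ)
    (a : Fin n → Y) : ℝ :=
  ((∑ ε : Fin n → Bool, ‖∑ i, (if ε i then (1 : ℝ) else -1) • a i‖ ^ p) / 2 ^ n) ^ (1 / p)

/-- The type-`p` constant `Type_p(Y) ∈ [0,∞]`: the least `C` such that
`(E_ε ‖∑ ε_i a_i‖^p)^{1/p} ≤ C (∑ ‖a_i‖^p)^{1/p}` for all finite families in `Y`. -/
def typeConst (p : ℝ) (Y : Type*) [NormedAddCommGroup Y] [NormedSpace ℝ Y] : ℝ≥0∞ :=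
  sInf {C : ℝ≥0∞ | ∀ (n : ℕ) (a : Fin n → Y),
    ENNReal.ofReal (radAvg p n a) ≤ C * ENNReal.ofReal ((∑ i, ‖a i‖ ^ p) ^ (1 / p))}

/-- The UMD property of a Banach space `E`: for each `1 < r < ∞` the Haar system is
unconditional in `L^r_E`. -/
def IsUMD (E : Type*) [NormedAddCommGroup E] [NormedSpace ℝ E] : Prop :=
  ∀ r : ℝ, 1 < r → ∃ β : ℝ, ∀ (s : Finset DyadicI) (x : DyadicI → E) (ε : DyadicI → ℝ),
    (∀ I, ε I = 1 ∨ ε I = -1) →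
    LpNormV r s (fun I => ε I • x I) ≤ β * LpNormV r s x

/-- `B` is a block in `L` with top `I`: `B ⊆ L`, `I` is the unique maximal interval
of `B`, and `B` is order-convex in `L` between its elements and `I`. -/
def IsBlock (L : Set DyadicI) (B : Set DyadicI) (I : DyadicI) : Prop :=
  B ⊆ L ∧ I ∈ B ∧ (∀ J ∈ B, toSet J ⊆ toSet I) ∧
    ∀ J ∈ B, ∀ K ∈ L, toSet J ⊆ toSet K → toSet K ⊆ toSet I → K ∈ B

/-- `G₁(K | E)`: the maximal dyadic intervals of `E` strictly contained in `K`. -/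
def gen1 (K : DyadicI) (E : Set DyadicI) : Set DyadicI :=
  {J | J ∈ E ∧ toSet J ⊂ toSet K ∧
    ∀ J' ∈ E, toSet J' ⊂ toSet K → toSet J ⊆ toSet J' → J' = J}

end Defs

/-! The `E`-intervals containing a point `t` form a chain, and `𝕊(f)(t) ≤ ∑ 𝕊(f_I)(t)` over that
chain. Peeling off the smallest interval repeatedly with `(a + b)^p ≤ (1 + c) a^p + C b^p` bounds
`𝕊(f)^p` by `C ∑ (1 + c)^{d_I} 𝕊(f_I)^p`, where `d_I(t)` counts the intervals of `E` that contain
`t` and are strictly smaller than `I`. By the block property, `𝕊(f_I)` is constant on each of these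
smaller intervals, so the Carleson condition yields, for small `c`, the weighted
John–Nirenberg estimate `∫ (1 + c)^{d_I} 𝕊(f_I)^p ≤ 2 ∫ 𝕊(f_I)^p`. -/

open scoped Finset

section Chains

variable {ι : Type*} [PartialOrder ι]

@[elab_as_elim]
lemma chain_induction {P : Finset ι → Prop} (empty : P ∅)
    (insert_lt : ∀ i A, (∀ j ∈ A, i < j) → P A → P (insert i A))
    (A : Finset ι) (hA : IsChain (· ≤ ·) (A : Set ι)) : P A := by
  induction A using Finset.strongInduction with
  | H A ih =>
    rcases A.eq_empty_or_nonempty with rfl | hne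
    · exact empty
    obtain ⟨i, hi⟩ := A.exists_minimal hne
    have lt_of_mem_erase : ∀ j ∈ A.erase i, i < j := fun j hj => by
      obtain ⟨hji, hj⟩ := Finset.mem_erase.1 hj
      exact ((hA.total hi.prop hj).elim id (hi.le_of_le hj)).lt_of_ne' hji
    rw [← Finset.insert_erase hi.prop]
    exact insert_lt i _ lt_of_mem_erase
      (ih _ (Finset.erase_ssubset hi.prop) (hA.mono (Finset.erase_subset i A)))

lemma sum_insert_pow_card_lt {R : Type*} [CommSemiring R] {A : Finset ι} {i : ι}
    (h : ∀ j ∈ A, i < j) (r : R) (f : ι → R) :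
    ∑ j ∈ insert i A, r ^ #{k ∈ insert i A | k < j} * f j =
      f i + r * ∑ j ∈ A, r ^ #{k ∈ A | k < j} * f j := by
  have hi : i ∉ A := fun hi => lt_irrefl i (h i hi)
  have card_below_min : #{k ∈ insert i A | k < i} = 0 := by
    rw [Finset.card_eq_zero, Finset.filter_eq_empty_iff, Finset.forall_mem_insert]
    exact ⟨lt_irrefl i, fun k hk => (h k hk).asymm⟩
  have card_below : ∀ j ∈ A, #{k ∈ insert i A | k < j} = #{k ∈ A | k < j} + 1 := fun j hj => by
    rw [Finset.filter_insert, if_pos (h j hj),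
      Finset.card_insert_of_notMem fun hi' => hi (Finset.mem_filter.1 hi').1]
  rw [Finset.sum_insert hi, card_below_min, pow_zero, one_mul, Finset.mul_sum]
  congr 1
  refine Finset.sum_congr rfl fun j hj => ?_
  rw [card_below j hj]
  ring

lemma one_add_pow_card_of_isChain {R : Type*} [CommSemiring R] (c : R) {A : Finset ι}
    (hA : IsChain (· ≤ ·) (A : Set ι)) :
    (1 + c) ^ #A = 1 + c * ∑ j ∈ A, (1 + c) ^ #{k ∈ A | k < j} := by
  refine chain_induction (by simp) (fun i A hi ih => ?_) A hA
  have sum_insert := sum_insert_pow_card_lt hi (1 + c) fun _ => 1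
  simp only [mul_one] at sum_insert
  rw [Finset.card_insert_of_notMem fun h => lt_irrefl i (hi i h), pow_succ, ih, sum_insert]
  ring

lemma exists_add_rpow_le {p : ℝ} (hp : 0 < p) {c : ℝ≥0} (hc : 0 < c) :
    ∃ C : ℝ≥0, 0 < C ∧ ∀ a b : ℝ≥0∞, (a + b) ^ p ≤ (1 + c) * a ^ p + C * b ^ p := by
  obtain ⟨δ, hδ, δ_rpow⟩ : ∃ δ : ℝ≥0, 0 < δ ∧ (1 + δ) ^ p = 1 + c := by
    have one_lt : 1 < (1 + c) ^ p⁻¹ :=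
      NNReal.one_lt_rpow (lt_add_of_pos_right 1 hc) (inv_pos.2 hp)
    refine ⟨(1 + c) ^ p⁻¹ - 1, tsub_pos_of_lt one_lt, ?_⟩
    rw [add_tsub_cancel_of_le one_lt.le, NNReal.rpow_inv_rpow hp.ne']
  refine ⟨(1 + δ⁻¹) ^ p, by positivity, fun a b => ?_⟩
  rcases le_total b (δ * a) with hba | hab
  · calc (a + b) ^ p ≤ ((1 + δ : ℝ≥0) * a) ^ p := by
          gcongr
          push_cast
          rw [add_mul, one_mul]
          gcongr
      _ = (1 + c) * a ^ p := by
          rw [ENNReal.mul_rpow_of_nonneg _ _ hp.le, ← ENNReal.coe_rpow_of_nonneg _ hp.le, δ_rpow]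
          push_cast
          rfl
      _ ≤ _ := le_self_add
  · have a_le : a ≤ (δ⁻¹ : ℝ≥0) * b := by
      rw [ENNReal.coe_inv hδ.ne', mul_comm, ← div_eq_mul_inv]
      exact ENNReal.le_div_iff_mul_le (by simp [hδ.ne']) (by simp) |>.2 (by rwa [mul_comm])
    calc (a + b) ^ p ≤ ((1 + δ⁻¹ : ℝ≥0) * b) ^ p := by
          gcongr
          push_cast [add_mul, one_mul] at a_le ⊢
          rw [add_comm a]
          gcongr
      _ = ((1 + δ⁻¹) ^ p : ℝ≥0) * b ^ p := by
          rw [ENNReal.mul_rpow_of_nonneg _ _ hp.le, ENNReal.coe_rpow_of_nonneg _ hp.le]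
      _ ≤ _ := le_add_self

lemma sum_rpow_le_of_isChain {p : ℝ} (hp : 0 < p) {r C : ℝ≥0∞}
    (hC : ∀ a b : ℝ≥0∞, (a + b) ^ p ≤ r * a ^ p + C * b ^ p) (g : ι → ℝ≥0∞)
    {A : Finset ι} (hA : IsChain (· ≤ ·) (A : Set ι)) :
    (∑ j ∈ A, g j) ^ p ≤ C * ∑ j ∈ A, r ^ #{k ∈ A | k < j} * g j ^ p := by
  refine chain_induction (by simp [hp]) (fun i A hi ih => ?_) A hA
  rw [sum_insert_pow_card_lt hi, Finset.sum_insert fun h => lt_irrefl i (hi i h), add_comm]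
  calc (∑ j ∈ A, g j + g i) ^ p
      ≤ r * (∑ j ∈ A, g j) ^ p + C * g i ^ p := hC _ _
    _ ≤ r * (C * ∑ j ∈ A, r ^ #{k ∈ A | k < j} * g j ^ p) + C * g i ^ p := by gcongr
    _ = C * (g i ^ p + r * ∑ j ∈ A, r ^ #{k ∈ A | k < j} * g j ^ p) := by ring

end Chains

section Laminar

variable {α ι : Type*} [PartialOrder ι]

/-- A laminar family of sets, indexed so that a smaller index gives a smaller set: sets with
incomparable indices are disjoint. -/
structure IsLaminar (S : ι → Set α) : Prop where
  monotone : Monotone S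
  le_or_le_or_disjoint : ∀ i j, i ≤ j ∨ j ≤ i ∨ Disjoint (S i) (S j)

/-- The number of members of `E` strictly below `j` whose set contains `t`. -/
def depthBelow (S : ι → Set α) (E : Finset ι) (j : ι) (t : α) : ℕ := #{k ∈ E | k < j ∧ t ∈ S k}

/-- The `Λ`-Carleson packing condition for the sets `S k`, `k ∈ E`, with respect to `μ`. -/
def IsCarleson [MeasurableSpace α] (μ : Measure α) (S : ι → Set α) (E : Finset ι) (Λ : ℝ≥0∞) :
    Prop :=
  ∀ j ∈ E, ∑ k ∈ E with k ≤ j, μ (S k) ≤ Λ * μ (S j)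

variable {S : ι → Set α} {E : Finset ι}

lemma IsLaminar.isChain_of_forall_mem (hS : IsLaminar S) {A : Set ι} {t : α}
    (hA : ∀ k ∈ A, t ∈ S k) : IsChain (· ≤ ·) A := fun i hi j hj _ => by
  rcases hS.le_or_le_or_disjoint i j with hij | hji | hdisj
  · exact Or.inl hij
  · exact Or.inr hji
  · exact (Set.disjoint_left.1 hdisj (hA i hi) (hA j hj)).elim

lemma depthBelow_eq_card_filter {A : Finset ι} {j : ι} {t : α}
    (hA : ∀ k, k < j → (k ∈ A ↔ k ∈ E ∧ t ∈ S k)) : depthBelow S E j t = #{k ∈ A | k < j} := by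
  rw [depthBelow]
  congr 1
  ext k
  simp only [Finset.mem_filter]
  grind

lemma IsLaminar.one_add_pow_depthBelow (hS : IsLaminar S) (c : ℝ≥0∞) (j : ι) (t : α) :
    (1 + c) ^ depthBelow S E j t =
      1 + c * ∑ k ∈ E with k < j, (S k).indicator (fun t => (1 + c) ^ depthBelow S E k t) t := by
  rw [depthBelow, one_add_pow_card_of_isChain c (hS.isChain_of_forall_mem (t := t) (by simp)),
    ← Finset.filter_filter, Finset.sum_filter (t ∈ S ·)]
  congr 2
  refine Finset.sum_congr rfl fun k hk => ?_
  have hkj := (Finset.mem_filter.1 hk).2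
  rw [Set.indicator_apply, depthBelow_eq_card_filter fun l hl => ?_]
  simp [hl.trans hkj]

lemma IsLaminar.sum_rpow_le (hS : IsLaminar S) {p : ℝ} (hp : 0 < p) {r C : ℝ≥0∞}
    (hC : ∀ a b : ℝ≥0∞, (a + b) ^ p ≤ r * a ^ p + C * b ^ p) {g : ι → ℝ≥0∞} {t : α}
    (hg : ∀ j ∈ E, t ∉ S j → g j = 0) :
    (∑ j ∈ E, g j) ^ p ≤ C * ∑ j ∈ E, r ^ depthBelow S E j t * g j ^ p := by
  have sum_chain : ∑ j ∈ E with t ∈ S j, g j = ∑ j ∈ E, g j :=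
    Finset.sum_filter_of_ne fun j hj hgj => by_contra fun ht => hgj (hg j hj ht)
  rw [← sum_chain]
  refine (sum_rpow_le_of_isChain hp hC g
    (hS.isChain_of_forall_mem (t := t) (by simp))).trans ?_
  gcongr C * ?_
  calc ∑ j ∈ E with t ∈ S j, r ^ #{k ∈ {k ∈ E | t ∈ S k} | k < j} * g j ^ p
      = ∑ j ∈ E with t ∈ S j, r ^ depthBelow S E j t * g j ^ p := by
        refine Finset.sum_congr rfl fun j _ => ?_
        rw [← depthBelow_eq_card_filter fun k _ => Finset.mem_filter]
    _ ≤ _ := Finset.sum_le_sum_of_subset (Finset.filter_subset _ E)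

variable [MeasurableSpace α] {μ : Measure α} {Λ : ℝ≥0∞}

lemma measurable_depthBelow (hmeas : ∀ k, MeasurableSet (S k)) (j : ι) :
    Measurable (depthBelow S E j) := by
  have depthBelow_eq_sum : depthBelow S E j = fun t => ∑ k ∈ E, if k < j ∧ t ∈ S k then 1 else 0 :=
    funext fun t => Finset.card_filter _ E
  rw [depthBelow_eq_sum]
  exact Finset.measurable_fun_sum _ fun k _ =>
    Measurable.ite ((MeasurableSet.const _).inter (hmeas k)) measurable_const measurable_const

lemma setLIntegral_eq_const_mul {A : Set α} (hA : MeasurableSet A) {G : α → ℝ≥0∞} {a : ℝ≥0∞}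
    (hG : EqOn G (fun _ => a) A) : ∫⁻ t in A, G t ∂μ = a * μ A := by
  rw [setLIntegral_congr_fun hA hG, setLIntegral_const]

/-- Below each maximal index `m < j` the function `G` is a constant, so there the Carleson
condition at `m` applies, and the sets `S m` are disjoint. -/
lemma IsCarleson.sum_setLIntegral_le (hE : IsCarleson μ S E Λ) (hS : IsLaminar S)
    (hmeas : ∀ k, MeasurableSet (S k)) {j : ι} {G : α → ℝ≥0∞}
    (hG : ∀ k ∈ E, k < j → ∃ a, EqOn G (fun _ => a) (S k)) :
    ∑ k ∈ E with k < j, ∫⁻ t in S k, G t ∂μ ≤ Λ * ∫⁻ t in S j, G t ∂μ := by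
  set F : Finset ι := {k ∈ E | k < j}
  set M : Finset ι := {m ∈ F | Maximal (· ∈ F) m}
  have exists_maximal_ge : ∀ k ∈ F, ∃ m ∈ M, k ≤ m := fun k hk => by
    obtain ⟨m, hkm, hm⟩ := F.exists_le_maximal hk
    exact ⟨m, Finset.mem_filter.2 ⟨hm.prop, hm⟩, hkm⟩
  have disjoint_maximal : (M : Set ι).PairwiseDisjoint S := fun m hm m' hm' hne => by
    have hm := Finset.mem_filter.1 hm
    have hm' := Finset.mem_filter.1 hm'
    rcases hS.le_or_le_or_disjoint m m' with h | h | h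
    · exact (hne (hm.2.eq_of_le hm'.1 h)).elim
    · exact (hne (hm'.2.eq_of_le hm.1 h).symm).elim
    · exact h
  have packing_le : ∀ m ∈ M,
      ∑ k ∈ E with k ≤ m, ∫⁻ t in S k, G t ∂μ ≤ Λ * ∫⁻ t in S m, G t ∂μ := fun m hm => by
    obtain ⟨hmE, hmj⟩ := Finset.mem_filter.1 (Finset.mem_filter.1 hm).1
    obtain ⟨a, ha⟩ := hG m hmE hmj
    calc ∑ k ∈ E with k ≤ m, ∫⁻ t in S k, G t ∂μ = a * ∑ k ∈ E with k ≤ m, μ (S k) := by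
          rw [Finset.mul_sum]
          exact Finset.sum_congr rfl fun k hk => setLIntegral_eq_const_mul (hmeas k)
            (ha.mono (hS.monotone (Finset.mem_filter.1 hk).2))
      _ ≤ a * (Λ * μ (S m)) := by gcongr; exact hE m hmE
      _ = Λ * ∫⁻ t in S m, G t ∂μ := by
          rw [setLIntegral_eq_const_mul (hmeas m) ha, mul_left_comm]
  choose! top top_mem le_top using exists_maximal_ge
  calc ∑ k ∈ F, ∫⁻ t in S k, G t ∂μ
      = ∑ m ∈ M, ∑ k ∈ F with top k = m, ∫⁻ t in S k, G t ∂μ :=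
        (Finset.sum_fiberwise_of_maps_to top_mem _).symm
    _ ≤ ∑ m ∈ M, ∑ k ∈ E with k ≤ m, ∫⁻ t in S k, G t ∂μ := by
        refine Finset.sum_le_sum fun m _ => Finset.sum_le_sum_of_subset fun k hk => ?_
        obtain ⟨hkF, rfl⟩ := Finset.mem_filter.1 hk
        exact Finset.mem_filter.2 ⟨(Finset.mem_filter.1 hkF).1, le_top k hkF⟩
    _ ≤ ∑ m ∈ M, Λ * ∫⁻ t in S m, G t ∂μ := Finset.sum_le_sum packing_le
    _ = Λ * ∫⁻ t in ⋃ m ∈ M, S m, G t ∂μ := by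
        rw [lintegral_biUnion_finset disjoint_maximal fun m _ => hmeas m, Finset.mul_sum]
    _ ≤ Λ * ∫⁻ t in S j, G t ∂μ := by
        gcongr
        exact Set.iUnion₂_subset fun m hm =>
          hS.monotone (Finset.mem_filter.1 (Finset.mem_filter.1 hm).1).2.le

lemma IsCarleson.setLIntegral_one_add_pow_depthBelow_mul_le (hE : IsCarleson μ S E Λ)
    (hS : IsLaminar S) (hmeas : ∀ k, MeasurableSet (S k)) {c : ℝ≥0∞} (hc : 2 * c * Λ ≤ 1)
    {G : α → ℝ≥0∞} (hGm : Measurable G) (j : ι)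
    (hG : ∀ k ∈ E, k < j → ∃ a, EqOn G (fun _ => a) (S k)) :
    ∫⁻ t in S j, (1 + c) ^ depthBelow S E j t * G t ∂μ ≤ 2 * ∫⁻ t in S j, G t ∂μ := by
  induction hn : #{k ∈ E | k < j} using Nat.strong_induction_on generalizing j with
  | _ n ih =>
  subst hn
  set W : ι → α → ℝ≥0∞ := fun k t => (1 + c) ^ depthBelow S E k t * G t
  have measurable_W : ∀ k, Measurable (W k) := fun k =>
    ((measurable_from_nat (f := fun n => (1 + c) ^ n)).comp (measurable_depthBelow hmeas k)).mul hGm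
  have W_eq : ∀ t, W j t = G t + c * ∑ k ∈ E with k < j, (S k).indicator (W k) t := fun t => by
    simp only [W, hS.one_add_pow_depthBelow c j, add_mul, one_mul, mul_assoc, Finset.sum_mul,
      Set.indicator_mul_left]
  have W_le : ∀ k ∈ E.filter (· < j),
      ∫⁻ t in S j, (S k).indicator (W k) t ∂μ ≤ 2 * ∫⁻ t in S k, G t ∂μ := fun k hk => by
    have hkj := (Finset.mem_filter.1 hk).2
    have card_lt : #{l ∈ E | l < k} < #{l ∈ E | l < j} :=
      Finset.card_lt_card <| Finset.ssubset_iff_of_subset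
        (Finset.monotone_filter_right E fun l _ hl => hl.trans hkj) |>.2 ⟨k, hk, by simp⟩
    refine (setLIntegral_le_lintegral _ _).trans ?_
    rw [lintegral_indicator (hmeas k)]
    exact ih _ card_lt k (fun l hl hlk => hG l hl (hlk.trans hkj)) rfl
  calc ∫⁻ t in S j, W j t ∂μ
      = ∫⁻ t in S j, G t ∂μ
          + c * ∑ k ∈ E with k < j, ∫⁻ t in S j, (S k).indicator (W k) t ∂μ := by
        have measurable_indicator_W k := (measurable_W k).indicator (hmeas k)
        simp only [W_eq]
        rw [lintegral_add_left hGm, lintegral_const_mul _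
          (Finset.measurable_fun_sum _ fun k _ => measurable_indicator_W k),
          lintegral_finsetSum _ fun k _ => measurable_indicator_W k]
    _ ≤ ∫⁻ t in S j, G t ∂μ + c * ∑ k ∈ E with k < j, 2 * ∫⁻ t in S k, G t ∂μ := by
        gcongr with k hk
        exact W_le k hk
    _ ≤ ∫⁻ t in S j, G t ∂μ + c * (2 * (Λ * ∫⁻ t in S j, G t ∂μ)) := by
        rw [← Finset.mul_sum]
        gcongr
        exact hE.sum_setLIntegral_le hS hmeas hG
    _ = (1 + 2 * c * Λ) * ∫⁻ t in S j, G t ∂μ := by ring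
    _ ≤ 2 * ∫⁻ t in S j, G t ∂μ := by
        gcongr
        exact (add_le_add_right hc 1).trans_eq one_add_one_eq_two

theorem IsCarleson.lintegral_sum_rpow_le (hE : IsCarleson μ S E Λ) (hS : IsLaminar S)
    (hmeas : ∀ k, MeasurableSet (S k)) {p : ℝ} (hp : 0 < p) {c C : ℝ≥0∞} (hc : 2 * c * Λ ≤ 1)
    (hC : ∀ a b : ℝ≥0∞, (a + b) ^ p ≤ (1 + c) * a ^ p + C * b ^ p) {g : ι → α → ℝ≥0∞}
    (hgm : ∀ j, Measurable (g j)) (hsupp : ∀ j ∈ E, (g j).support ⊆ S j)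
    (hconst : ∀ j ∈ E, ∀ k ∈ E, k < j → ∃ a, EqOn (g j) (fun _ => a) (S k)) :
    ∫⁻ t, (∑ j ∈ E, g j t) ^ p ∂μ ≤ 2 * C * ∑ j ∈ E, ∫⁻ t, g j t ^ p ∂μ := by
  set W : ι → α → ℝ≥0∞ := fun j t => (1 + c) ^ depthBelow S E j t * g j t ^ p
  have measurable_W : ∀ j, Measurable (W j) := fun j =>
    ((measurable_from_nat (f := fun n => (1 + c) ^ n)).comp (measurable_depthBelow hmeas j)).mul
      ((hgm j).pow_const p)
  have W_le : ∀ j ∈ E, ∫⁻ t, W j t ∂μ ≤ 2 * ∫⁻ t, g j t ^ p ∂μ := fun j hj => by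
    have support_W : (W j).support ⊆ S j := fun t ht =>
      hsupp j hj fun h0 => ht (by simp [W, h0, hp])
    rw [← setLIntegral_eq_of_support_subset support_W]
    refine (hE.setLIntegral_one_add_pow_depthBelow_mul_le hS hmeas hc ((hgm j).pow_const p) j
      fun k hk hkj => ?_).trans ?_
    · obtain ⟨a, ha⟩ := hconst j hj k hk hkj
      exact ⟨a ^ p, fun t ht => congrArg (· ^ p) (ha ht)⟩
    · gcongr
      exact Measure.restrict_le_self
  calc ∫⁻ t, (∑ j ∈ E, g j t) ^ p ∂μ
      ≤ ∫⁻ t, C * ∑ j ∈ E, W j t ∂μ := by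
        gcongr with t
        exact hS.sum_rpow_le hp hC fun j hj ht =>
          Function.notMem_support.1 fun h => ht (hsupp j hj h)
    _ = C * ∑ j ∈ E, ∫⁻ t, W j t ∂μ := by
        rw [lintegral_const_mul _ (Finset.measurable_fun_sum _ fun j _ => measurable_W j),
          lintegral_finsetSum _ fun j _ => measurable_W j]
    _ ≤ C * ∑ j ∈ E, 2 * ∫⁻ t, g j t ^ p ∂μ := by gcongr with j hj; exact W_le j hj
    _ = 2 * C * ∑ j ∈ E, ∫⁻ t, g j t ^ p ∂μ := by rw [← Finset.mul_sum]; ring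

end Laminar

section Rademacher

open scoped BigOperators

lemma expect_restrict₂ {ι α M : Type*} [Fintype α] [Nonempty α] [AddCommMonoid M] [Module ℚ≥0 M]
    {B s : Finset ι} (hBs : B ⊆ s) (F : (B → α) → M) :
    𝔼 ε : s → α, F (Finset.restrict₂ (π := fun _ => α) hBs ε) = 𝔼 δ : B → α, F δ := by
  obtain ⟨R, disjoint_B_R, rfl⟩ : ∃ R, Disjoint B R ∧ B ∪ R = s :=
    ⟨s \ B, Finset.disjoint_sdiff, Finset.union_sdiff_of_subset hBs⟩
  calc 𝔼 ε, F (Finset.restrict₂ (π := fun _ => α) hBs ε)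
      = 𝔼 δ : (B → α) × (R → α), F δ.1 := by
        refine (Fintype.expect_equiv (Equiv.piFinsetUnion (fun _ => α) disjoint_B_R) _ _
          fun δ => congrArg F (funext fun i => ?_)).symm
        exact (Equiv.piFinsetUnion_left (fun _ => α) disjoint_B_R i.2 _).symm
    _ = 𝔼 δ, F δ := by
        rw [← Finset.univ_product_univ, Finset.expect_product]
        simp only [Fintype.expect_const]

lemma sqrt_expect_norm_sum_sq_le {ι κ X : Type*} [Fintype κ] [SeminormedAddCommGroup X]
    (E : Finset ι) (F : ι → κ → X) :
    √(𝔼 k, ‖∑ i ∈ E, F i k‖ ^ 2) ≤ ∑ i ∈ E, √(𝔼 k, ‖F i k‖ ^ 2) := by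
  simp only [Fintype.expect_eq_sum_div_card, Real.sqrt_div' _ (Nat.cast_nonneg _)]
  rw [← Finset.sum_div]
  gcongr
  simpa [PiLp.norm_eq_of_L2] using
    norm_sum_le E fun i => (WithLp.toLp 2 (F i) : PiLp 2 fun _ : κ => X)

variable {ι X : Type*} [NormedAddCommGroup X] [NormedSpace ℝ X] {s : Finset ι} {v w : ι → X}

/-- The signs `±1` encoded by `ε : s → Bool`, extended by `0` off `s`. -/
def signOf (ε : s → Bool) (i : ι) : ℝ := if h : i ∈ s then (if ε ⟨i, h⟩ then 1 else -1) else 0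

/-- The Rademacher average `(𝔼_ε ‖∑_{i ∈ s} ε_i v_i‖²)^{1/2}`. -/
def rademacherL2 (s : Finset ι) (v : ι → X) : ℝ :=
  √(𝔼 ε : s → Bool, ‖∑ i ∈ s, signOf ε i • v i‖ ^ 2)

lemma abs_signOf_le_one (ε : s → Bool) (i : ι) : |signOf ε i| ≤ 1 := by
  unfold signOf
  split_ifs <;> simp

lemma signOf_restrict₂ {B : Finset ι} (hBs : B ⊆ s) (ε : s → Bool) {i : ι} (hi : i ∈ B) :
    signOf (Finset.restrict₂ (π := fun _ => Bool) hBs ε) i = signOf ε i := by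
  rw [signOf, signOf, dif_pos hi, dif_pos (hBs hi)]
  rfl

lemma rademacherL2_eq_of_subset {B : Finset ι} (hBs : B ⊆ s) (v : ι → X) :
    rademacherL2 B v = √(𝔼 ε : s → Bool, ‖∑ i ∈ B, signOf ε i • v i‖ ^ 2) := by
  rw [rademacherL2, ← expect_restrict₂ hBs]
  congr! 5 with ε - i hi
  rw [signOf_restrict₂ hBs ε hi]

lemma rademacherL2_biUnion_le {κ : Type*} {E : Finset κ} {B : κ → Finset ι}
    (hB : (E : Set κ).PairwiseDisjoint B) (v : ι → X) :
    rademacherL2 (E.biUnion B) v ≤ ∑ I ∈ E, rademacherL2 (B I) v := by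
  rw [Finset.sum_congr rfl fun I hI =>
    rademacherL2_eq_of_subset (Finset.subset_biUnion_of_mem B hI) v]
  simp only [rademacherL2, Finset.sum_biUnion hB]
  exact sqrt_expect_norm_sum_sq_le E _

lemma rademacherL2_congr (h : ∀ i ∈ s, v i = w i) : rademacherL2 s v = rademacherL2 s w := by
  unfold rademacherL2
  congr! 5 with ε - i hi
  rw [h i hi]

lemma rademacherL2_le_sum_norm (s : Finset ι) (v : ι → X) :
    rademacherL2 s v ≤ ∑ i ∈ s, ‖v i‖ := by
  refine Real.sqrt_le_iff.2 ⟨by positivity, Finset.expect_le Finset.univ_nonempty fun ε _ => ?_⟩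
  gcongr
  refine norm_sum_le_of_le s fun i _ => ?_
  rw [norm_smul, Real.norm_eq_abs]
  exact mul_le_of_le_one_left (norm_nonneg _) (abs_signOf_le_one ε i)

lemma measurable_rademacherL2 {α : Type*} [MeasurableSpace α] (s : Finset ι) {v : α → ι → X}
    (hv : ∀ i, StronglyMeasurable fun t => v t i) : Measurable fun t => rademacherL2 s (v t) := by
  simp only [rademacherL2, Fintype.expect_eq_sum_div_card]
  refine Measurable.sqrt (Measurable.div_const (Finset.measurable_fun_sum _ fun ε _ => ?_) _)
  exact (Finset.stronglyMeasurable_fun_sum s fun i _ =>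
    (hv i).const_smul (signOf ε i)).norm.measurable.pow_const 2

end Rademacher

namespace DyadicI

lemma len_pos (I : DyadicI) : 0 < I.len := zpow_pos two_pos _

lemma haar_eq_zero_of_notMem {J : DyadicI} {t : ℝ} (ht : t ∉ J.toSet) : haar J t = 0 := by
  have len_pos := J.len_pos
  rw [toSet, ← Set.Ico_union_Ico_eq_Ico (b := J.lep + J.len / 2) (by linarith) (by linarith),
    Set.mem_union, not_or] at ht
  rw [haar, if_neg ht.1, if_neg ht.2]

lemma abs_haar_le_one (J : DyadicI) (t : ℝ) : |haar J t| ≤ 1 := by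
  unfold haar
  split_ifs <;> simp

lemma measurable_haar (J : DyadicI) : Measurable (haar J) :=
  Measurable.ite measurableSet_Ico measurable_const
    (Measurable.ite measurableSet_Ico measurable_const measurable_const)

end DyadicI

section SquareFunction

variable {X : Type*} [NormedAddCommGroup X] [NormedSpace ℝ X] {s : Finset DyadicI}
  {x : DyadicI → X}

lemma sqFn_eq_rademacherL2 (s : Finset DyadicI) (x : DyadicI → X) (t : ℝ) :
    sqFn s x t = rademacherL2 s fun I => haar I t • x I := by
  simp only [sqFn, rademacherL2, Fintype.expect_eq_sum_div_card, Fintype.card_fun,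
    Fintype.card_bool, Fintype.card_coe, Nat.cast_pow, Nat.cast_ofNat]
  congr! 4 with ε
  rw [← Finset.sum_attach s]
  simp [signOf, smul_smul]

lemma sqFn_nonneg (s : Finset DyadicI) (x : DyadicI → X) (t : ℝ) : 0 ≤ sqFn s x t :=
  Real.sqrt_nonneg _

lemma sqFn_congr {t u : ℝ} (h : ∀ J ∈ s, haar J t = haar J u) : sqFn s x t = sqFn s x u := by
  simp only [sqFn_eq_rademacherL2]
  exact rademacherL2_congr fun J hJ => by rw [h J hJ]

lemma sqFn_le_sum_norm (s : Finset DyadicI) (x : DyadicI → X) (t : ℝ) :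
    sqFn s x t ≤ ∑ I ∈ s, ‖x I‖ := by
  rw [sqFn_eq_rademacherL2]
  refine (rademacherL2_le_sum_norm s _).trans (Finset.sum_le_sum fun I _ => ?_)
  rw [norm_smul]
  exact mul_le_of_le_one_left (norm_nonneg _) (abs_haar_le_one I t)

lemma support_sqFn_subset_iUnion (s : Finset DyadicI) (x : DyadicI → X) :
    (sqFn s x).support ⊆ ⋃ J ∈ s, J.toSet := by
  refine Function.support_subset_iff'.2 fun t ht => ?_
  simp only [Set.mem_iUnion, not_exists] at ht
  refine le_antisymm ?_ (sqFn_nonneg s x t)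
  rw [sqFn_eq_rademacherL2]
  refine (rademacherL2_le_sum_norm s _).trans (Finset.sum_nonpos fun J hJ => ?_)
  simp [haar_eq_zero_of_notMem (ht J hJ)]

lemma measurable_sqFn (s : Finset DyadicI) (x : DyadicI → X) : Measurable (sqFn s x) := by
  simp only [funext (sqFn_eq_rademacherL2 s x)]
  exact measurable_rademacherL2 s fun I => (measurable_haar I).stronglyMeasurable.smul_const (x I)

lemma integrable_sqFn_rpow {p : ℝ} (hp : 0 ≤ p) (s : Finset DyadicI) (x : DyadicI → X)
    (μ : Measure ℝ) [IsFiniteMeasure μ] : Integrable (fun t => sqFn s x t ^ p) μ := by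
  refine .of_bound ((measurable_sqFn s x).pow_const p).aestronglyMeasurable
    ((∑ I ∈ s, ‖x I‖) ^ p) (.of_forall fun t => ?_)
  rw [Real.norm_of_nonneg (Real.rpow_nonneg (sqFn_nonneg s x t) p)]
  exact Real.rpow_le_rpow (sqFn_nonneg s x t) (sqFn_le_sum_norm s x t) hp

lemma HpNormV_nonneg (p : ℝ) (s : Finset DyadicI) (x : DyadicI → X) : 0 ≤ HpNormV p s x :=
  Real.rpow_nonneg (integral_nonneg fun t => Real.rpow_nonneg (sqFn_nonneg s x t) p) _

lemma ofReal_HpNormV_rpow {p : ℝ} (hp : 0 < p) (s : Finset DyadicI) (x : DyadicI → X) :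
    ENNReal.ofReal (HpNormV p s x ^ p) =
      ∫⁻ t in Icc 0 1, ENNReal.ofReal (sqFn s x t) ^ p := by
  have sqFn_rpow_nonneg t : 0 ≤ sqFn s x t ^ p := Real.rpow_nonneg (sqFn_nonneg s x t) p
  rw [HpNormV, ← Real.rpow_mul (integral_nonneg sqFn_rpow_nonneg), one_div_mul_cancel hp.ne',
    Real.rpow_one, ofReal_integral_eq_lintegral_ofReal (integrable_sqFn_rpow hp.le s x _)
      (.of_forall sqFn_rpow_nonneg)]
  simp only [ENNReal.ofReal_rpow_of_nonneg (sqFn_nonneg s x _) hp.le]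

end SquareFunction

namespace DyadicI

lemma len_eq (I : DyadicI) : I.len = 1 / 2 ^ I.n := by simp [len]

lemma mem_toSet_iff_floor {I : DyadicI} {t : ℝ} : t ∈ I.toSet ↔ ⌊t * 2 ^ I.n⌋ = I.k := by
  rw [Int.floor_eq_iff, toSet, lep, len_eq, Set.mem_Ico, mul_one_div, ← add_div,
    div_le_iff₀ (by positivity), lt_div_iff₀ (by positivity), Int.cast_natCast]

lemma mem_toSet_iff_of_mem {J K : DyadicI} (hn : J.n ≤ K.n) {t u : ℝ} (ht : t ∈ K.toSet)
    (hu : u ∈ K.toSet) : t ∈ J.toSet ↔ u ∈ J.toSet := by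
  obtain ⟨d, hd⟩ := Nat.exists_eq_add_of_le hn
  have floor_coarse (r : ℝ) : ⌊r * 2 ^ J.n⌋ = ⌊r * 2 ^ K.n⌋ / (2 ^ d : ℕ) := by
    rw [← Int.floor_div_natCast, hd, pow_add]
    push_cast
    field_simp
  simp only [mem_toSet_iff_floor] at ht hu ⊢
  rw [floor_coarse t, floor_coarse u, ht, hu]

lemma nonempty_toSet (I : DyadicI) : I.toSet.Nonempty :=
  Set.nonempty_Ico.2 (lt_add_of_pos_right _ I.len_pos)

lemma toSet_injective : Function.Injective toSet := fun I J hIJ => by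
  obtain ⟨lep_eq, right_eq⟩ := (Set.Ico_eq_Ico_iff (.inl (lt_add_of_pos_right _ I.len_pos))).1 hIJ
  have len_eq : I.len = J.len := add_left_cancel (lep_eq ▸ right_eq)
  have n_eq : I.n = J.n := by
    simpa using zpow_right_injective₀ two_pos (by norm_num) len_eq
  have k_eq : I.k = J.k := by
    rw [lep, lep, len_eq] at lep_eq
    exact_mod_cast mul_right_cancel₀ J.len_pos.ne' lep_eq
  cases I
  cases J
  simp_all only

instance : PartialOrder DyadicI := PartialOrder.lift toSet toSet_injective

lemma le_of_mem {J K : DyadicI} (hn : J.n ≤ K.n) {t : ℝ} (hJ : t ∈ J.toSet) (hK : t ∈ K.toSet) :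
    K ≤ J := fun _ hu => (mem_toSet_iff_of_mem hn hK hu).1 hJ

lemma isLaminar_toSet : IsLaminar toSet where
  monotone _ _ h := h
  le_or_le_or_disjoint I J := by
    rw [← or_assoc, or_iff_not_imp_right, Set.not_disjoint_iff]
    rintro ⟨t, hI, hJ⟩
    exact (le_total J.n I.n).imp (le_of_mem · hJ hI) (le_of_mem · hI hJ)

/-- The left half of a dyadic interval. -/
def leftHalf (I : DyadicI) : DyadicI := ⟨I.n + 1, 2 * I.k, by have := I.hk; omega⟩

/-- The right half of a dyadic interval. -/
def rightHalf (I : DyadicI) : DyadicI := ⟨I.n + 1, 2 * I.k + 1, by have := I.hk; omega⟩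

lemma toSet_leftHalf (I : DyadicI) : I.leftHalf.toSet = Ico I.lep (I.lep + I.len / 2) := by
  rw [toSet]
  congr 1 <;> simp only [leftHalf, lep, len_eq] <;> push_cast <;> ring

lemma toSet_rightHalf (I : DyadicI) :
    I.rightHalf.toSet = Ico (I.lep + I.len / 2) (I.lep + I.len) := by
  rw [toSet]
  congr 1 <;> simp only [rightHalf, lep, len_eq] <;> push_cast <;> ring

lemma haar_eq_of_mem {J K : DyadicI} (hn : J.n < K.n) {t u : ℝ} (ht : t ∈ K.toSet)
    (hu : u ∈ K.toSet) : haar J t = haar J u := by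
  have left : t ∈ J.leftHalf.toSet ↔ u ∈ J.leftHalf.toSet :=
    mem_toSet_iff_of_mem (J := J.leftHalf) hn ht hu
  have right : t ∈ J.rightHalf.toSet ↔ u ∈ J.rightHalf.toSet :=
    mem_toSet_iff_of_mem (J := J.rightHalf) hn ht hu
  rw [toSet_leftHalf] at left
  rw [toSet_rightHalf] at right
  simp only [haar, left, right]

lemma measurableSet_toSet (I : DyadicI) : MeasurableSet I.toSet := measurableSet_Ico

lemma toSet_subset_Icc (I : DyadicI) : I.toSet ⊆ Icc 0 1 := by
  have right_le : I.lep + I.len ≤ 1 := by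
    rw [lep, len_eq, mul_one_div, ← add_div, div_le_one (by positivity)]
    exact_mod_cast I.hk
  exact Set.Ico_subset_Icc_self.trans
    (Set.Icc_subset_Icc (mul_nonneg I.k.cast_nonneg I.len_pos.le) right_le)

lemma volume_restrict_toSet (I : DyadicI) :
    volume.restrict (Icc 0 1) I.toSet = ENNReal.ofReal I.len := by
  rw [Measure.restrict_apply (measurableSet_toSet I), Set.inter_eq_left.2 I.toSet_subset_Icc,
    toSet, Real.volume_Ico, add_sub_cancel_left]

end DyadicI

lemma isCarleson_of_carleson_le {E : Finset DyadicI} {Λ : ℝ≥0∞} (h : carleson ↑E ≤ Λ) :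
    IsCarleson (volume.restrict (Icc 0 1)) toSet E Λ := fun I hI => by
  have packing := (iSup₂_le_iff.1 h) I hI
  rw [ENNReal.div_le_iff (by simp [I.len_pos]) ENNReal.ofReal_ne_top] at packing
  simp only [volume_restrict_toSet]
  have coe_filter : {J | J ∈ (E : Set DyadicI) ∧ J.toSet ⊆ I.toSet} =
      ({J ∈ E | J ≤ I} : Finset DyadicI) := (Finset.coe_filter _ E).symm
  calc ∑ J ∈ E with J ≤ I, ENNReal.ofReal J.len
      = ∑' J : {J | J ∈ (E : Set DyadicI) ∧ J.toSet ⊆ I.toSet}, ENNReal.ofReal J.1.len := by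
        rw [coe_filter, Finset.tsum_subtype' _ fun J : DyadicI => ENNReal.ofReal J.len]
    _ ≤ Λ * ENNReal.ofReal I.len := packing

/-- `s` is partitioned into the blocks `B I`, `I ∈ E`, each `B I` having top `I`. -/
structure IsBlockPartition (s E : Finset DyadicI) (B : DyadicI → Finset DyadicI) : Prop where
  isBlock : ∀ I ∈ E, IsBlock ↑s ↑(B I) I
  pairwiseDisjoint : (E : Set DyadicI).PairwiseDisjoint B
  eq_biUnion : s = E.biUnion B

section BlockPartition

variable {X : Type*} [NormedAddCommGroup X] [NormedSpace ℝ X] {s E : Finset DyadicI}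
  {B : DyadicI → Finset DyadicI}

lemma IsBlockPartition.sqFn_le_sum (hB : IsBlockPartition s E B) (x : DyadicI → X) (t : ℝ) :
    sqFn s x t ≤ ∑ I ∈ E, sqFn (B I) x t := by
  simp only [sqFn_eq_rademacherL2, hB.eq_biUnion]
  exact rademacherL2_biUnion_le hB.pairwiseDisjoint _

lemma IsBlock.support_sqFn_subset {L : Set DyadicI} {A : Finset DyadicI} {I : DyadicI}
    (hA : IsBlock L A I) (x : DyadicI → X) : (sqFn A x).support ⊆ I.toSet :=
  (support_sqFn_subset_iUnion A x).trans (Set.iUnion₂_subset hA.2.2.1)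

lemma IsBlock.haar_eq_of_mem {L A : Set DyadicI} {I J K : DyadicI} (hA : IsBlock L A I)
    (hJ : J ∈ A) (hK : K ∈ L \ A) (hKI : K ≤ I) {t u : ℝ} (ht : t ∈ K.toSet) (hu : u ∈ K.toSet) :
    haar J t = haar J u := by
  have not_le : ¬ J ≤ K := fun hJK => hK.2 (hA.2.2.2 J hJ K hK.1 hJK hKI)
  rcases lt_or_ge J.n K.n with hn | hn
  · exact DyadicI.haar_eq_of_mem hn ht hu
  · have notMem {r : ℝ} (hr : r ∈ K.toSet) : r ∉ J.toSet := fun hrJ => not_le (le_of_mem hn hr hrJ)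
    rw [haar_eq_zero_of_notMem (notMem ht), haar_eq_zero_of_notMem (notMem hu)]

lemma IsBlockPartition.sqFn_eq_of_mem (hB : IsBlockPartition s E B) {I K : DyadicI} (hI : I ∈ E)
    (hK : K ∈ E) (hKI : K < I) (x : DyadicI → X) {t u : ℝ} (ht : t ∈ K.toSet)
    (hu : u ∈ K.toSet) : sqFn (B I) x t = sqFn (B I) x u := by
  have K_mem_block : K ∈ B K := (hB.isBlock K hK).2.1
  have K_notMem : K ∉ B I :=
    Finset.disjoint_left.1 (hB.pairwiseDisjoint hK hI hKI.ne) K_mem_block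
  exact sqFn_congr fun J hJ => (hB.isBlock I hI).haar_eq_of_mem hJ
    ⟨(hB.isBlock K hK).1 K_mem_block, K_notMem⟩ hKI.le ht hu

lemma IsBlockPartition.ofReal_HpNormV_rpow_le (hB : IsBlockPartition s E B) {Λ : ℝ≥0∞}
    (hE : carleson ↑E ≤ Λ) {p : ℝ} (hp : 0 < p) {c C : ℝ≥0∞} (hc : 2 * c * Λ ≤ 1)
    (hC : ∀ a b : ℝ≥0∞, (a + b) ^ p ≤ (1 + c) * a ^ p + C * b ^ p) (x : DyadicI → X) :
    ENNReal.ofReal (HpNormV p s x ^ p) ≤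
      2 * C * ∑ I ∈ E, ENNReal.ofReal (HpNormV p (B I) x ^ p) := by
  simp only [ofReal_HpNormV_rpow hp]
  calc ∫⁻ t in Icc 0 1, ENNReal.ofReal (sqFn s x t) ^ p
      ≤ ∫⁻ t in Icc 0 1, (∑ I ∈ E, ENNReal.ofReal (sqFn (B I) x t)) ^ p := by
        gcongr with t
        rw [← ENNReal.ofReal_sum_of_nonneg fun I _ => sqFn_nonneg (B I) x t]
        exact ENNReal.ofReal_le_ofReal (hB.sqFn_le_sum x t)
    _ ≤ _ := by
        refine (isCarleson_of_carleson_le hE).lintegral_sum_rpow_le isLaminar_toSet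
          measurableSet_toSet hp hc hC (fun I => (measurable_sqFn (B I) x).ennreal_ofReal)
          (fun I hI => ?_) fun I hI K hK hKI => ?_
        · exact (Function.support_comp_subset ENNReal.ofReal_zero _).trans
            ((hB.isBlock I hI).support_sqFn_subset x)
        · obtain ⟨u, hu⟩ := K.nonempty_toSet
          exact ⟨_, fun t ht => congrArg _ (hB.sqFn_eq_of_mem hI hK hKI x ht hu)⟩

end BlockPartition

theorem statement15_general {p : ℝ} (hp : 0 < p) (Λ : ℝ≥0) :
    ∃ C : ℝ, 0 < C ∧
      ∀ (X : Type*) [NormedAddCommGroup X] [NormedSpace ℝ X] (s : Finset DyadicI)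
        (x : DyadicI → X) (E : Finset DyadicI) (B : DyadicI → Finset DyadicI),
          IsBlockPartition s E B → carleson ↑E ≤ Λ →
          HpNormV p s x ^ p ≤ C * ∑ I ∈ E, HpNormV p (B I) x ^ p := by
  obtain ⟨c, hc, hcΛ⟩ : ∃ c : ℝ≥0, 0 < c ∧ 2 * c * Λ ≤ 1 := by
    refine ⟨(2 * Λ + 1)⁻¹, by positivity, ?_⟩
    rw [mul_right_comm, ← div_eq_mul_inv]
    exact div_le_one_of_le₀ le_self_add zero_le
  obtain ⟨C, hC, add_rpow_le⟩ := exists_add_rpow_le hp hc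
  refine ⟨2 * C, by positivity, fun X _ _ s x E B hB hE => ?_⟩
  have rpow_nonneg (A : Finset DyadicI) : 0 ≤ HpNormV p A x ^ p :=
    Real.rpow_nonneg (HpNormV_nonneg p A x) p
  rw [← ENNReal.ofReal_le_ofReal_iff (mul_nonneg (by positivity)
    (Finset.sum_nonneg fun I _ => rpow_nonneg (B I))),
    ENNReal.ofReal_mul (by positivity),
    ENNReal.ofReal_sum_of_nonneg fun I _ => rpow_nonneg (B I)]
  convert hB.ofReal_HpNormV_rpow_le hE hp (by exact_mod_cast hcΛ) add_rpow_le x using 2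
  simp [ENNReal.ofReal_mul]

/-- Let `1 ≤ p < ∞` and `X` a Banach space. There is `C > 0`
depending only on `p` such that: if `f = ∑_J x_J h_J` is a finitely supported
`X`-valued Haar expansion whose Haar support `s` is partitioned into blocks
`{B(I) : I ∈ E}` with Carleson constant `⟦E⟧ ≤ 4`, then
`‖f‖_{H^p_X}^p ≤ C · ∑_{I ∈ E} ‖f_I‖_{H^p_X}^p`, where `f_I = ∑_{J ∈ B(I)} x_J h_J`. -/
theorem statement15 (p : ℝ) (hp : 1 ≤ p) :
    ∃ C : ℝ, 0 < C ∧
      ∀ (X : Type*) [NormedAddCommGroup X] [NormedSpace ℝ X] [CompleteSpace X]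
        (s : Finset DyadicI) (x : DyadicI → X), (∀ I, x I ≠ 0 ↔ I ∈ s) →
        ∀ (E : Finset DyadicI) (B : DyadicI → Finset DyadicI),
          (∀ I ∈ E, IsBlock (↑s) (↑(B I)) I) →
          (∀ I ∈ E, ∀ I' ∈ E, I ≠ I' → Disjoint (B I) (B I')) →
          (∀ J, J ∈ s ↔ ∃ I ∈ E, J ∈ B I) →
          carleson (↑E) ≤ 4 →
          HpNormV p s x ^ p ≤ C * ∑ I ∈ E, HpNormV p (B I) x ^ p := by
  obtain ⟨C, hC, bound⟩ := statement15_general (one_pos.trans_le hp) 4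
  exact ⟨C, hC, fun X _ _ _ s x _ E B hblock hdisj hcover => bound X s x E B
    ⟨hblock, hdisj, Finset.ext fun J => by rw [hcover, Finset.mem_biUnion]⟩⟩
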